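/- arXiv:math/9702228 — 3 statements merged into one kernel-verified Lean document; each statement's English description precedes it below -/
import Mathlib

section
/- Let κ be a cardinal, let J ⊆ κ^{≤ω} be closed under initial segments, and let u, v be finite subsets of J. Then u ≤ v if and only if r(u,v) = r(u,u). -/
/-! The initial-segment relation is a partial order in which `r'(η, ξ)` is the meet of `η, ξ ∈ J`
(`rPrime_spec`). Hence every element of the set `T(u, v)` of all `r'(η, ξ)` with `η ∈ u`, `ξ ∈ v`
(`rT J u v`) lies below an element of `u`. A set which contains `u`, and all of whose elements lie
below elements of `u`, has the same maximal elements as `u` (`maximal_of_cofinal`). In particular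
`r(u, u)` is the set of maximal elements of `u`.

If `u ≤ v`, then each `η ∈ u` equals `r'(η, ξ)` for some `ξ ∈ v`, so `u ⊆ T(u, v)` and
`r(u, v)` is the set of maximal elements of `u` too. Conversely, `u` being finite, every `η ∈ u`
lies below a maximal `η' ∈ u`; as `η' ∈ r(u, u) = r(u, v)`, it is below some element of `v`. -/

universe w

/-- A sequence of length `≤ ω` with values in the cardinal `κ` (i.e. values are
ordinals `< κ.ord`), represented as a partial function `ℕ → Option Ordinal`
whose domain is an initial segment of `ℕ`. -/
structure SeqLE (κ : Cardinal.{w}) : Type (w + 1) where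
  toFun : ℕ → Option Ordinal.{w}
  dom_closed : ∀ n : ℕ, (toFun (n + 1)).isSome → (toFun n).isSome
  val_lt : ∀ (n : ℕ) (o : Ordinal.{w}), toFun n = some o → o < κ.ord

namespace SeqLE

/-- `η` is an initial segment of `ξ`. -/
def IsPrefix {κ : Cardinal.{w}} (η ξ : SeqLE κ) : Prop :=
  ∀ (n : ℕ) (o : Ordinal.{w}), η.toFun n = some o → ξ.toFun n = some o

/-- `η` is a proper initial segment of `ξ`. -/
def IsStrictPrefix {κ : Cardinal.{w}} (η ξ : SeqLE κ) : Prop :=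
  IsPrefix η ξ ∧ η ≠ ξ

/-- `J` is closed under initial segments. -/
def ClosedUnderInitialSegments {κ : Cardinal.{w}} (J : Set (SeqLE κ)) : Prop :=
  ∀ ξ ∈ J, ∀ η : SeqLE κ, IsPrefix η ξ → η ∈ J

end SeqLE

/-- `A ≤ B` : every element of `A` is an initial segment of some element of `B`. -/
def SetLE {κ : Cardinal.{w}} (A B : Set (SeqLE κ)) : Prop :=
  ∀ η ∈ A, ∃ ξ ∈ B, SeqLE.IsPrefix η ξ

/- `r'(η,ξ)` : the longest element of `J` that is an initial segment of both
`η` and `ξ` (when `J` is closed under initial segments and `η, ξ ∈ J`, this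
exists and is unique). -/
open Classical in
noncomputable def rPrime {κ : Cardinal.{w}} (J : Set (SeqLE κ)) (η ξ : SeqLE κ) : SeqLE κ :=
  if h : ∃ σ : SeqLE κ, σ ∈ J ∧ SeqLE.IsPrefix σ η ∧ SeqLE.IsPrefix σ ξ ∧
      ∀ τ ∈ J, SeqLE.IsPrefix τ η → SeqLE.IsPrefix τ ξ → SeqLE.IsPrefix τ σ
  then h.choose else η

/-- The set `T = {r'(η,ξ) : η ∈ u, ξ ∈ v}`. -/
def rT {κ : Cardinal.{w}} (J : Set (SeqLE κ)) (u v : Set (SeqLE κ)) : Set (SeqLE κ) :=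
  {σ : SeqLE κ | ∃ η ∈ u, ∃ ξ ∈ v, σ = rPrime J η ξ}

/-- `r(u,v)` : the elements of `T = {r'(η,ξ) : η ∈ u, ξ ∈ v}` that are not proper
initial segments of any other element of `T`. -/
def rSet {κ : Cardinal.{w}} (J : Set (SeqLE κ)) (u v : Set (SeqLE κ)) : Set (SeqLE κ) :=
  {σ ∈ rT J u v | ¬ ∃ τ ∈ rT J u v, SeqLE.IsStrictPrefix σ τ}

/-- The order on sequences in which `η ≤ ξ` means that `η` is an initial segment of `ξ`. -/
instance SeqLE.instPartialOrder {κ : Cardinal.{w}} : PartialOrder (SeqLE κ) where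
  le := SeqLE.IsPrefix
  le_refl _ _ _ h := h
  le_trans _ _ _ h₁ h₂ n o h := h₂ n o (h₁ n o h)
  le_antisymm a b h₁ h₂ := by
    have h : a.toFun = b.toFun := by
      funext n
      exact Option.ext fun o => ⟨h₁ n o, h₂ n o⟩
    cases a
    cases b
    cases h
    rfl

open Classical in
/-- The longest common initial segment of `η` and `ξ`: it follows `η` as long as `η` and `ξ`
agree. -/
noncomputable def SeqLE.meet {κ : Cardinal.{w}} (η ξ : SeqLE κ) : SeqLE κ where
  toFun n := if ∀ m ≤ n, η.toFun m = ξ.toFun m then η.toFun n else none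
  dom_closed n h := by
    split_ifs at h with h₁
    · rw [if_pos fun m hm => h₁ m (by omega)]
      exact η.dom_closed n h
    · simp at h
  val_lt n o h := by
    split_ifs at h
    exact η.val_lt n o h

theorem SeqLE.isSome_of_le {κ : Cardinal.{w}} (η : SeqLE κ) {m n : ℕ} (h : m ≤ n)
    (hn : (η.toFun n).isSome) : (η.toFun m).isSome := by
  induction n, h using Nat.le_induction with
  | base => exact hn
  | succ n _ ih => exact ih (η.dom_closed n hn)

theorem SeqLE.meet_le_left {κ : Cardinal.{w}} (η ξ : SeqLE κ) : SeqLE.meet η ξ ≤ η := by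
  intro n o h
  simp only [SeqLE.meet] at h
  split_ifs at h
  exact h

theorem SeqLE.meet_le_right {κ : Cardinal.{w}} (η ξ : SeqLE κ) : SeqLE.meet η ξ ≤ ξ := by
  intro n o h
  simp only [SeqLE.meet] at h
  split_ifs at h with h₁
  rw [← h₁ n le_rfl]
  exact h

theorem SeqLE.le_meet {κ : Cardinal.{w}} {τ η ξ : SeqLE κ} (h₁ : τ ≤ η) (h₂ : τ ≤ ξ) :
    τ ≤ SeqLE.meet η ξ := by
  intro n o h
  have key : ∀ m ≤ n, η.toFun m = ξ.toFun m := by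
    intro m hm
    obtain ⟨p, hp⟩ := Option.isSome_iff_exists.mp (τ.isSome_of_le hm (by simp [h]))
    rw [h₁ m p hp, h₂ m p hp]
  simp only [SeqLE.meet]
  rw [if_pos key]
  exact h₁ n o h

/-- For `η ∈ J`, with `J` closed under initial segments, the existence condition in the definition
of `r'(η, ξ)` holds, so `r'(η, ξ)` is the greatest lower bound of `η` and `ξ` in `J`. -/
theorem rPrime_spec {κ : Cardinal.{w}} {J : Set (SeqLE κ)}
    (hJ : SeqLE.ClosedUnderInitialSegments J) {η : SeqLE κ} (ξ : SeqLE κ) (hη : η ∈ J) :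
    rPrime J η ξ ≤ η ∧ rPrime J η ξ ≤ ξ ∧ ∀ τ ∈ J, τ ≤ η → τ ≤ ξ → τ ≤ rPrime J η ξ := by
  have h : ∃ σ : SeqLE κ, σ ∈ J ∧ SeqLE.IsPrefix σ η ∧ SeqLE.IsPrefix σ ξ ∧
      ∀ τ ∈ J, SeqLE.IsPrefix τ η → SeqLE.IsPrefix τ ξ → SeqLE.IsPrefix τ σ :=
    ⟨SeqLE.meet η ξ, hJ η hη _ (SeqLE.meet_le_left η ξ), SeqLE.meet_le_left η ξ,
      SeqLE.meet_le_right η ξ, fun _ _ h₁ h₂ => SeqLE.le_meet h₁ h₂⟩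
  rw [rPrime, dif_pos h]
  exact h.choose_spec.2

theorem rPrime_eq_left {κ : Cardinal.{w}} {J : Set (SeqLE κ)}
    (hJ : SeqLE.ClosedUnderInitialSegments J) {η ξ : SeqLE κ} (hη : η ∈ J) (h : η ≤ ξ) :
    rPrime J η ξ = η :=
  le_antisymm (rPrime_spec hJ ξ hη).1 ((rPrime_spec hJ ξ hη).2.2 η hη le_rfl h)

theorem mem_rSet_iff_maximal {κ : Cardinal.{w}} {J u v : Set (SeqLE κ)} {σ : SeqLE κ} :
    σ ∈ rSet J u v ↔ Maximal (· ∈ rT J u v) σ := by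
  constructor
  · rintro ⟨h₁, h₂⟩
    refine ⟨h₁, fun τ hτ hle => ?_⟩
    by_contra hn
    exact h₂ ⟨τ, hτ, hle, fun e => hn e.ge⟩
  · rintro ⟨h₁, h₂⟩
    refine ⟨h₁, ?_⟩
    rintro ⟨τ, hτ, hle, hne⟩
    exact hne (le_antisymm hle (h₂ hτ hle))

theorem maximal_of_cofinal {α : Type*} [PartialOrder α] {u T : Set α} (h₁ : u ⊆ T)
    (h₂ : ∀ τ ∈ T, ∃ η ∈ u, τ ≤ η) (σ : α) : Maximal (· ∈ T) σ ↔ Maximal (· ∈ u) σ := by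
  constructor
  · rintro ⟨hσ, hmax⟩
    obtain ⟨η, hη, hle⟩ := h₂ σ hσ
    have e : σ = η := le_antisymm hle (hmax (h₁ hη) hle)
    exact ⟨e ▸ hη, fun τ hτ => hmax (h₁ hτ)⟩
  · rintro ⟨hσ, hmax⟩
    refine ⟨h₁ hσ, fun τ hτ hle => ?_⟩
    obtain ⟨η, hη, hle'⟩ := h₂ τ hτ
    exact hle'.trans (hmax hη (hle.trans hle'))

/-- If `u ≤ v`, then `r(u, v)` is the set of maximal elements of `u`. -/
theorem mem_rSet_of_setLE {κ : Cardinal.{w}} {J u v : Set (SeqLE κ)}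
    (hJ : SeqLE.ClosedUnderInitialSegments J) (huJ : u ⊆ J) (h : SetLE u v) (σ : SeqLE κ) :
    σ ∈ rSet J u v ↔ Maximal (· ∈ u) σ := by
  rw [mem_rSet_iff_maximal]
  refine maximal_of_cofinal (fun η hη => ?_) ?_ σ
  · obtain ⟨ξ, hξ, hle⟩ := h η hη
    exact ⟨η, hη, ξ, hξ, (rPrime_eq_left hJ (huJ hη) hle).symm⟩
  · rintro _ ⟨η, hη, ξ, _, rfl⟩
    exact ⟨η, hη, (rPrime_spec hJ ξ (huJ hη)).1⟩

/-- `u ≤ v` if and only if `r(u,v) = r(u,u)`. -/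
theorem setLE_iff_rSet_eq (κ : Cardinal.{w}) (J : Set (SeqLE κ))
    (hJ : SeqLE.ClosedUnderInitialSegments J)
    (u v : Set (SeqLE κ)) (hu : u.Finite) (hv : v.Finite) (huJ : u ⊆ J) (hvJ : v ⊆ J) :
    SetLE u v ↔ rSet J u v = rSet J u u := by
  have huu : SetLE u u := fun η hη => ⟨η, hη, le_refl η⟩
  constructor
  · intro h
    ext σ
    rw [mem_rSet_of_setLE hJ huJ h, mem_rSet_of_setLE hJ huJ huu]
  · intro h η hη
    obtain ⟨η', hle, hmax⟩ := hu.exists_le_maximal hη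
    have hmem : η' ∈ rSet J u v := h ▸ (mem_rSet_of_setLE hJ huJ huu η').mpr hmax
    obtain ⟨⟨ζ, hζ, ξ, hξ, rfl⟩, _⟩ := hmem
    exact ⟨ξ, hξ, hle.trans (rPrime_spec hJ ξ (huJ hζ)).2.1⟩
end

section
/- Let κ be a cardinal. The strict domination relation on finite subsets of κ^{≤ω}, defined by u < v if and only if u ≤ v and not v ≤ u, is well-founded: there is no infinite sequence (u_n)_{n<ω} of finite subsets of κ^{≤ω} with u_{n+1} < u_n for all n. -/
/-!
The initial segments of a fixed sequence are linearly ordered by length, and lengths are well-ordered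
(`SeqLE.isPrefix_of_len_le`). Hence the set of initial segments of elements of a finite set `u 0`,
a finite union of well-ordered chains, has no bad sequence for the prefix order.

A descending chain would give one: choose `x n ∈ u n` that is not an initial segment of any element
of `u (n + 1)`. For `n < m`, `x m` is an initial segment of an element of `u (n + 1)`, so `x n` is
not an initial segment of `x m`. But each `x n` lies below an element of the finite set `u 0`, so
infinitely many lie below the same `ξ`; among those indices take `n` with `x n` of least length,
and any larger `m`. Then `x n` is an initial segment of `x m`.
-/

universe w

namespace SeqLE

/-- The length of a sequence, in `ℕ∞`: the least index outside the domain, or `⊤` if there is none. -/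
noncomputable def len {κ : Cardinal.{w}} (η : SeqLE κ) : ℕ∞ :=
  ⨅ (n : ℕ) (_ : η.toFun n = none), (n : ℕ∞)

theorem isSome_of_le_s5 {κ : Cardinal.{w}} (η : SeqLE κ) {k n : ℕ} (hkn : k ≤ n)
    (h : (η.toFun n).isSome) : (η.toFun k).isSome := by
  induction n, hkn using Nat.le_induction with
  | base => exact h
  | succ n _ ih => exact ih (η.dom_closed n h)

theorem lt_len_iff {κ : Cardinal.{w}} (η : SeqLE κ) (n : ℕ) :
    (n : ℕ∞) < η.len ↔ (η.toFun n).isSome := by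
  constructor
  · intro h
    by_contra hn
    exact absurd (iInf₂_le n (by simpa using hn)) (not_le.mpr h)
  · intro h
    refine lt_of_lt_of_le (b := ((n + 1 : ℕ) : ℕ∞)) (by exact_mod_cast n.lt_succ_self) ?_
    refine le_iInf₂ fun m hm => ?_
    by_contra hlt
    have hmn : m ≤ n := by
      have : m < n + 1 := by exact_mod_cast not_le.mp hlt
      omega
    simpa [hm] using η.isSome_of_le_s5 hmn h

/-- Initial segments of a common sequence are compared by their lengths. -/
theorem isPrefix_of_len_le {κ : Cardinal.{w}} {a b ξ : SeqLE κ} (ha : IsPrefix a ξ)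
    (hb : IsPrefix b ξ) (h : a.len ≤ b.len) : IsPrefix a b := by
  intro n o ho
  have h1 : (b.toFun n).isSome :=
    (b.lt_len_iff n).1 (((a.lt_len_iff n).2 (by simp [ho])).trans_le h)
  obtain ⟨p, hp⟩ := Option.isSome_iff_exists.1 h1
  rw [hp, ← hb n p hp, ha n o ho]

theorem IsPrefix.trans {κ : Cardinal.{w}} {a b c : SeqLE κ} (hab : IsPrefix a b)
    (hbc : IsPrefix b c) : IsPrefix a c :=
  fun n o h => hbc n o (hab n o h)

end SeqLE

theorem SetLE.trans {κ : Cardinal.{w}} {A B C : Set (SeqLE κ)} (hAB : SetLE A B)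
    (hBC : SetLE B C) : SetLE A C := by
  intro η hη
  obtain ⟨ξ, hξ, h1⟩ := hAB η hη
  obtain ⟨ζ, hζ, h2⟩ := hBC ξ hξ
  exact ⟨ζ, hζ, h1.trans h2⟩

theorem setLE_of_le {κ : Cardinal.{w}} {u : ℕ → Set (SeqLE κ)}
    (h : ∀ n, SetLE (u (n + 1)) (u n)) {m n : ℕ} (hmn : m ≤ n) : SetLE (u n) (u m) := by
  induction n, hmn using Nat.le_induction with
  | base => exact fun η hη => ⟨η, hη, fun _ _ h => h⟩
  | succ n _ ih => exact (h n).trans ih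

/-- The strict domination relation `u < v ↔ u ≤ v ∧ ¬ v ≤ u` on finite subsets of
`κ^{≤ω}` is well-founded: there is no infinite strictly descending sequence. -/
theorem no_infinite_descending_chain (κ : Cardinal.{w}) :
    ¬ ∃ u : ℕ → Set (SeqLE κ), (∀ n, (u n).Finite) ∧
      ∀ n, SetLE (u (n + 1)) (u n) ∧ ¬ SetLE (u n) (u (n + 1)) := by
  rintro ⟨u, hfin, hu⟩
  have hle : ∀ n, SetLE (u (n + 1)) (u n) := fun n => (hu n).1
  have hx : ∀ n, ∃ x ∈ u n, ∀ ξ ∈ u (n + 1), ¬ SeqLE.IsPrefix x ξ := by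
    intro n
    have h := (hu n).2
    unfold SetLE at h
    push Not at h
    exact h
  choose x hxu hxn using hx
  have hbad : ∀ n m, n < m → ¬ SeqLE.IsPrefix (x n) (x m) := by
    intro n m hnm hp
    obtain ⟨ξ, hξ, h⟩ := setLE_of_le hle (Nat.succ_le_of_lt hnm) (x m) (hxu m)
    exact hxn n ξ hξ (hp.trans h)
  choose f hfu hf using fun n => setLE_of_le hle (Nat.zero_le n) (x n) (hxu n)
  have : Finite (u 0) := hfin 0
  obtain ⟨ξ, hξ⟩ := Finite.exists_infinite_fiber (fun n => (⟨f n, hfu n⟩ : u 0))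
  have hS := Set.infinite_coe_iff.1 hξ
  obtain ⟨n, hn, hmin⟩ := exists_minimalFor_of_wellFoundedLT
    (fun n => n ∈ (fun n => (⟨f n, hfu n⟩ : u 0)) ⁻¹' {ξ}) (fun n => (x n).len) hS.nonempty
  obtain ⟨m, hm, hnm⟩ := hS.exists_gt n
  have hfnm : f n = f m := congrArg Subtype.val (Eq.trans hn (Eq.symm hm))
  refine hbad n m hnm (SeqLE.isPrefix_of_len_le (hfnm ▸ hf n) (hf m) ?_)
  exact (le_total (x n).len (x m).len).elim id fun h => hmin hm h
end

section
/- Let κ be a cardinal and let I be any set of finite subsets of κ^{≤ω}. Then there exist an ordinal α* and a bijective enumeration (u_i)_{i<α*} of I such that for all i, j < α*, if u_i ≤ u_j and not u_j ≤ u_i, then i < j. -/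
/-!
The relation `u ≤ v ∧ ¬ v ≤ u` on finite sets of sequences is well-founded, so it extends to a
well-order of `I`, whose order type and canonical enumeration are the ones required.

Well-foundedness is witnessed by a rank in `ℕ ×ₗ ℕ`. The first coordinate counts the infinite
sequences in `u`; the second counts the members of the downward closure of `u` that are not initial
segments of an infinite sequence of `u`. The latter are all initial segments of finite sequences of
`u`, so there are finitely many of them. If `u ≤ v`, then, infinite sequences being maximal, every
infinite sequence of `u` lies in `v`. Either `v` has more infinite sequences, or both have the same
ones; in that case the second coordinate counts the growth of the downward closure.
-/

universe w

namespace SeqLE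

variable {κ : Cardinal.{w}}

theorem IsPrefix.rfl' (η : SeqLE κ) : IsPrefix η η := fun _ _ h => h

theorem IsPrefix.trans' {η ξ ζ : SeqLE κ} (h : IsPrefix η ξ) (h' : IsPrefix ξ ζ) :
    IsPrefix η ζ := fun n o ho => h' n o (h n o ho)

theorem ext_toFun {η ξ : SeqLE κ} (h : ∀ n, η.toFun n = ξ.toFun n) : η = ξ := by
  cases η; cases ξ
  congr
  exact funext h

/-- The sequence has length `ω`. -/
def IsInf (η : SeqLE κ) : Prop := ∀ n, η.toFun n ≠ none

/-- Infinite sequences are maximal for the initial segment order. -/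
theorem IsInf.eq_of_isPrefix {η ξ : SeqLE κ} (hη : η.IsInf) (h : IsPrefix η ξ) : η = ξ := by
  refine ext_toFun fun n => ?_
  obtain ⟨o, ho⟩ := Option.ne_none_iff_exists'.1 (hη n)
  rw [ho, h n o ho]

theorem toFun_eq_none_of_le (ξ : SeqLE κ) {n : ℕ} (hn : ξ.toFun n = none) {k : ℕ} (hk : n ≤ k) :
    ξ.toFun k = none := by
  induction k, hk using Nat.le_induction with
  | base => exact hn
  | succ k _ ih =>
    by_contra h
    have := ξ.dom_closed k (Option.isSome_iff_ne_none.2 h)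
    simp [ih] at this

/-- An initial segment of `ξ` is determined by its domain, so a finite sequence has only finitely
many initial segments. -/
theorem finite_prefixes {ξ : SeqLE κ} (hξ : ¬ ξ.IsInf) : {η | IsPrefix η ξ}.Finite := by
  obtain ⟨n, hn⟩ : ∃ n, ξ.toFun n = none := by simpa [IsInf] using hξ
  have hnone : ∀ η : SeqLE κ, IsPrefix η ξ → ∀ k, η.toFun k ≠ none → η.toFun k = ξ.toFun k := by
    intro η h k hk
    obtain ⟨o, ho⟩ := Option.ne_none_iff_exists'.1 hk
    rw [ho, h k o ho]
  refine Set.Finite.of_finite_image (f := fun η : SeqLE κ => {k | η.toFun k ≠ none})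
    ((Set.finite_Iio n).finite_subsets.subset ?_) ?_
  · rintro _ ⟨η, hη, rfl⟩ k hk
    by_contra hkn
    exact hk ((hnone η hη k hk).trans (ξ.toFun_eq_none_of_le hn (not_lt.1 hkn)))
  · intro η hη ζ hζ h
    refine ext_toFun fun k => ?_
    have hk : η.toFun k ≠ none ↔ ζ.toFun k ≠ none := Set.ext_iff.1 h k
    by_cases h0 : η.toFun k = none
    · rw [h0]
      by_contra h1
      exact hk.2 (Ne.symm h1) h0
    · rw [hnone η hη k h0, hnone ζ hζ k (hk.1 h0)]

/-- The infinite sequences in `u`. -/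
def infPart (u : Set (SeqLE κ)) : Set (SeqLE κ) := {η ∈ u | η.IsInf}

/-- The downward closure of `u`. -/
def downset (u : Set (SeqLE κ)) : Set (SeqLE κ) := {η | ∃ ξ ∈ u, IsPrefix η ξ}

/-- The initial segments of members of `u` that are not initial segments of an infinite one. -/
def finPart (u : Set (SeqLE κ)) : Set (SeqLE κ) := downset u \ downset (infPart u)

theorem finite_finPart {u : Set (SeqLE κ)} (hu : u.Finite) : (finPart u).Finite := by
  refine ((hu.subset (Set.sep_subset u fun ξ => ¬ ξ.IsInf)).biUnion
    fun ξ hξ => finite_prefixes hξ.2).subset ?_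
  rintro η ⟨⟨ξ, hξ, h⟩, hη⟩
  exact Set.mem_biUnion (x := ξ) ⟨hξ, fun hi => hη ⟨ξ, ⟨hξ, hi⟩, h⟩⟩ h

theorem downset_mono_of_setLE {u v : Set (SeqLE κ)} (h : SetLE u v) : downset u ⊆ downset v := by
  rintro η ⟨ξ, hξ, hηξ⟩
  obtain ⟨ζ, hζ, hξζ⟩ := h ξ hξ
  exact ⟨ζ, hζ, hηξ.trans' hξζ⟩

theorem infPart_mono_of_setLE {u v : Set (SeqLE κ)} (h : SetLE u v) : infPart u ⊆ infPart v := by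
  rintro η ⟨hη, hi⟩
  obtain ⟨ξ, hξ, hp⟩ := h η hη
  obtain rfl := hi.eq_of_isPrefix hp
  exact ⟨hξ, hi⟩

/-- The lexicographic rank of `u`; meaningful only for finite `u`, since `Set.ncard` is `0` on
infinite sets. -/
noncomputable def rank (u : Set (SeqLE κ)) : ℕ ×ₗ ℕ :=
  toLex ((infPart u).ncard, (finPart u).ncard)

theorem rank_lt_rank {u v : Set (SeqLE κ)} (hv : v.Finite) (h : SetLE u v) (h' : ¬ SetLE v u) :
    rank u < rank v := by
  have hinf := infPart_mono_of_setLE h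
  have hfin : (infPart v).Finite := hv.subset (Set.sep_subset _ _)
  refine Prod.Lex.toLex_lt_toLex.2 ?_
  by_cases heq : infPart u = infPart v
  · refine Or.inr ⟨congrArg Set.ncard heq, Set.ncard_lt_ncard ?_ (finite_finPart hv)⟩
    refine ⟨?_, fun hsub => h' fun η hη => ?_⟩
    · rw [finPart, finPart, heq]
      exact Set.sdiff_subset_sdiff_left (downset_mono_of_setLE h)
    · change η ∈ downset u
      by_cases hd : η ∈ downset (infPart v)
      · rw [← heq] at hd
        obtain ⟨ξ, hξ, hp⟩ := hd
        exact ⟨ξ, hξ.1, hp⟩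
      · exact (hsub ⟨⟨η, hη, IsPrefix.rfl' η⟩, hd⟩).1
  · exact Or.inl (Set.ncard_lt_ncard (hinf.ssubset_of_ne heq) hfin)

end SeqLE

/-- Any set `I` of finite subsets of `κ^{≤ω}` admits an enumeration `(u_i)_{i<α*}`
such that `u_i ≤ u_j ∧ ¬ u_j ≤ u_i` implies `i < j`. -/
theorem exists_enumeration (κ : Cardinal.{w}) (I : Set (Set (SeqLE κ)))
    (hI : ∀ u ∈ I, u.Finite) :
    ∃ (αstar : Ordinal.{w + 1}) (e : ↥(Set.Iio αstar) ≃ ↥I),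
      ∀ i j : ↥(Set.Iio αstar),
        SetLE ((e i) : Set (SeqLE κ)) ((e j) : Set (SeqLE κ)) →
        ¬ SetLE ((e j) : Set (SeqLE κ)) ((e i) : Set (SeqLE κ)) →
        (i : Ordinal.{w + 1}) < (j : Ordinal.{w + 1}) := by
  have hwf : IsWellFounded I (fun u v => SeqLE.rank u.1 < SeqLE.rank v.1) :=
    ⟨InvImage.wf (fun u : I => SeqLE.rank u.1) wellFounded_lt⟩
  obtain ⟨s, hs, hwo⟩ := IsWellFounded.exists_well_order_ge
    (fun u v : I => SeqLE.rank u.1 < SeqLE.rank v.1)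
  refine ⟨Ordinal.type s, (Ordinal.enum s).toEquiv, fun i j h h' => ?_⟩
  exact (Ordinal.enum s).map_rel_iff.1 (hs _ _ (SeqLE.rank_lt_rank (hI _ (Subtype.prop _)) h h'))
end
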